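/- Let F : [0,1] → ℝ be a nonnegative function with F(t) > 0 for t ∈ (0,1], with sup over pairs s,t with 1 ≤ t/s ≤ 2 of F(t)/F(s) finite, and suppose that for some δ > 0 the map t ↦ F(t)/t^δ is increasing. Let Z be a nonnegative submartingale with càdlàg sample paths such that E[Z_t] ≤ F(t) for all t ∈ [0,1]. Then for every N ∈ ℕ (including 0) and every t ∈ [2^{-(N+1)}, 2^{-N}], the probability P(∃ s ∈ (0,t], Z_s > F(s)/s^δ) is at most (sup_{1 ≤ t/s ≤ 2} F(t)/F(s)) · 1/(2^{(N+1)δ}(1 - 2^{-δ})). -/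

import Mathlib

open MeasureTheory

/-!
Right-continuity reduces the supremum of a path over a time interval to a countable set of times,
so Doob's maximal inequality passes from finite sets of times to `(-∞, b]`. On the shell
`(t / r ^ (k + 1), t / r ^ k]` the level `F s / s ^ δ` is at least its value at the left endpoint
`a = t / r ^ (k + 1)`, while the mean at the right endpoint `b` is at most `F b ≤ C * F a`. Doob
therefore bounds the probability of crossing the level on the shell by `C * a ^ δ`, and these bounds
form a geometric series.
-/

open Set Filter Topology
open scoped NNReal ENNReal

section MaximalInequality

variable {Ω ι κ E : Type*} {m : MeasurableSpace Ω} {μ : Measure Ω}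

/-- The filtration `ℱ` observed at the times `τ k` only, so that results on discrete-time processes
apply to a process sampled at these times. -/
def sampledFiltration [Preorder ι] [Preorder κ] (ℱ : Filtration ι m) {τ : κ → ι}
    (hτ : Monotone τ) : Filtration κ m where
  seq k := ℱ (τ k)
  mono' _ _ hij := ℱ.mono (hτ hij)
  le' k := ℱ.le (τ k)

theorem submartingale_sampled [Preorder ι] [Preorder κ] [NormedAddCommGroup E] [NormedSpace ℝ E]
    [LE E] {ℱ : Filtration ι m} {Z : ι → Ω → E} (hZ : Submartingale Z ℱ μ)
    {τ : κ → ι} (hτ : Monotone τ) :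
    Submartingale (fun k => Z (τ k)) (sampledFiltration ℱ hτ) μ :=
  ⟨fun k => hZ.stronglyAdapted (τ k), fun _ _ hij => hZ.ae_le_condExp (hτ hij),
    fun k => hZ.integrable (τ k)⟩

theorem mul_measure_exists_le_nat_le [IsFiniteMeasure μ] {ℱ : Filtration ℕ m} {Z : ℕ → Ω → ℝ}
    (hZ : Submartingale Z ℱ μ) (hZ_nonneg : 0 ≤ Z) (n : ℕ) (ε : ℝ≥0) :
    ε * μ {ω | ∃ i ≤ n, ε ≤ Z i ω} ≤ ENNReal.ofReal (∫ ω, Z n ω ∂μ) := by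
  have h_sup : {ω | ∃ i ≤ n, ε ≤ Z i ω} = {ω | (ε : ℝ) ≤
      (Finset.range (n + 1)).sup' Finset.nonempty_range_add_one fun i => Z i ω} := by
    simp only [Finset.le_sup'_iff, Finset.mem_range_succ_iff]
  rw [h_sup]
  exact (maximal_ineq hZ hZ_nonneg n).trans <| ENNReal.ofReal_le_ofReal <|
    setIntegral_le_integral (hZ.integrable n) (.of_forall (hZ_nonneg n))

variable [LinearOrder ι]

theorem exists_monotone_nat_forall_mem_finset (s : Finset ι) {b : ι} (hb : ∀ i ∈ s, i ≤ b) :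
    ∃ τ : ℕ → ι, Monotone τ ∧ τ s.card = b ∧ ∀ i ∈ s, ∃ k ≤ s.card, τ k = i := by
  refine ⟨fun k => if hk : k < s.card then s.orderEmbOfFin rfl ⟨k, hk⟩ else b, ?_, by simp, ?_⟩
  · intro j k hjk
    by_cases hk : k < s.card
    · simpa only [dif_pos hk, dif_pos (hjk.trans_lt hk)]
        using (s.orderEmbOfFin rfl).monotone (Fin.mk_le_mk.2 hjk)
    · by_cases hj : j < s.card
      · simpa only [dif_pos hj, dif_neg hk] using hb _ (s.orderEmbOfFin_mem rfl _)
      · simp only [dif_neg hj, dif_neg hk, le_refl]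
  · intro i hi
    obtain ⟨k, rfl⟩ : i ∈ range (s.orderEmbOfFin rfl) := by rwa [s.range_orderEmbOfFin rfl]
    exact ⟨k, k.2.le, dif_pos k.2⟩

variable [IsFiniteMeasure μ] {ℱ : Filtration ι m} {Z : ι → Ω → ℝ}

theorem mul_measure_exists_mem_finset_le (hZ : Submartingale Z ℱ μ) (hZ_nonneg : 0 ≤ Z)
    (s : Finset ι) {b : ι} (hb : ∀ i ∈ s, i ≤ b) (ε : ℝ≥0) :
    ε * μ {ω | ∃ i ∈ s, ε ≤ Z i ω} ≤ ENNReal.ofReal (∫ ω, Z b ω ∂μ) := by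
  obtain ⟨τ, hτ, rfl, hs⟩ := exists_monotone_nat_forall_mem_finset s hb
  refine le_trans ?_ (mul_measure_exists_le_nat_le (submartingale_sampled hZ hτ)
    (fun k => hZ_nonneg (τ k)) s.card ε)
  gcongr ε * μ ?_
  rintro ω ⟨i, hi, hε⟩
  obtain ⟨k, hk, rfl⟩ := hs i hi
  exact ⟨k, hk, hε⟩

theorem mul_measure_exists_mem_countable_le (hZ : Submartingale Z ℱ μ) (hZ_nonneg : 0 ≤ Z)
    {D : Set ι} (hD : D.Countable) {b : ι} (hb : ∀ i ∈ D, i ≤ b) (ε : ℝ≥0) :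
    ε * μ {ω | ∃ i ∈ D, ε ≤ Z i ω} ≤ ENNReal.ofReal (∫ ω, Z b ω ∂μ) := by
  have := hD.to_subtype
  let A (s : Finset D) : Set Ω := {ω | ∃ i ∈ s.map (.subtype _), ε ≤ Z i ω}
  have hA_mono : Monotone A := fun s s' hss' ω ⟨i, hi, hε⟩ =>
    ⟨i, Finset.map_subset_map.2 hss' hi, hε⟩
  have hA_iUnion : {ω | ∃ i ∈ D, ε ≤ Z i ω} ⊆ ⋃ s, A s := fun ω ⟨i, hi, hε⟩ =>
    mem_iUnion.2 ⟨{⟨i, hi⟩}, i, by simp, hε⟩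
  calc ε * μ {ω | ∃ i ∈ D, ε ≤ Z i ω}
    _ ≤ ε * μ (⋃ s, A s) := by gcongr
    _ = ⨆ s, ε * μ (A s) := by rw [hA_mono.directed_le.measure_iUnion, ENNReal.mul_iSup]
    _ ≤ ENNReal.ofReal (∫ ω, Z b ω ∂μ) := iSup_le fun s =>
      mul_measure_exists_mem_finset_le hZ hZ_nonneg _
        (fun i hi => hb i (Finset.property_of_mem_map_subtype s hi)) ε

variable [TopologicalSpace ι] [OrderTopology ι] [SecondCountableTopology ι]

variable (ι) in
theorem exists_countable_forall_nhdsGE_inter_nonempty :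
    ∃ D : Set ι, D.Countable ∧ ∀ t, ∀ u ∈ 𝓝[≥] t, (u ∩ D).Nonempty := by
  obtain ⟨S, hS_countable, hS_dense⟩ := TopologicalSpace.exists_countable_dense ι
  refine ⟨S ∪ {t | 𝓝[>] t = ⊥}, hS_countable.union countable_setOfPred_isolated_right,
    fun t u hu => ?_⟩
  by_cases ht : 𝓝[>] t = ⊥
  · exact ⟨t, mem_of_mem_nhdsWithin self_mem_Ici hu, .inr ht⟩
  · have : (𝓝[>] t).NeBot := ⟨ht⟩
    obtain ⟨v, hv⟩ : (Ioi t).Nonempty := Filter.nonempty_of_mem (f := 𝓝[>] t) self_mem_nhdsWithin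
    obtain ⟨w, hw, hwu⟩ := (mem_nhdsGT_iff_exists_Ioo_subset' hv).1
      (nhdsWithin_mono t Ioi_subset_Ici_self hu)
    obtain ⟨s, hsS, hs⟩ := hS_dense.exists_mem_open isOpen_Ioo
      (Filter.nonempty_of_mem (Ioo_mem_nhdsGT hw))
    exact ⟨s, hwu hs, .inl hsS⟩

theorem mul_measure_exists_le_lt_le_of_rightContinuous (hZ : Submartingale Z ℱ μ)
    (hZ_nonneg : 0 ≤ Z)
    (hZ_right : ∀ ω t, ContinuousWithinAt (fun s => Z s ω) (Ici t) t) (b : ι) (ε : ℝ≥0) :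
    ε * μ {ω | ∃ s ≤ b, ε < Z s ω} ≤ ENNReal.ofReal (∫ ω, Z b ω ∂μ) := by
  obtain ⟨D, hD_countable, hD⟩ := exists_countable_forall_nhdsGE_inter_nonempty ι
  refine le_trans ?_ (mul_measure_exists_mem_countable_le hZ hZ_nonneg
    (D := insert b (D ∩ Iic b)) ((hD_countable.mono inter_subset_left).insert b) (by simp) ε)
  gcongr ε * μ ?_
  rintro ω ⟨s, hsb, hs⟩
  obtain rfl | hsb := hsb.eq_or_lt
  · exact ⟨s, mem_insert _ _, hs.le⟩
  · obtain ⟨u, ⟨hu, hub⟩, huD⟩ := hD s _ (inter_mem ((hZ_right _ s).eventually_const_lt hs)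
      (mem_nhdsWithin_of_mem_nhds (Iio_mem_nhds hsb)))
    exact ⟨u, .inr ⟨huD, (mem_Iio.1 hub).le⟩, hu.le⟩

theorem measure_exists_mem_Ioc_lt_le (hZ : Submartingale Z ℱ μ) (hZ_nonneg : 0 ≤ Z)
    (hZ_right : ∀ ω t, ContinuousWithinAt (fun s => Z s ω) (Ici t) t) {g : ι → ℝ} {a b : ι}
    {l : ℝ} (hl : 0 < l) (hg : ∀ s ∈ Ioc a b, l ≤ g s) :
    μ {ω | ∃ s ∈ Ioc a b, g s < Z s ω} ≤ ENNReal.ofReal ((∫ ω, Z b ω ∂μ) / l) := by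
  lift l to ℝ≥0 using hl.le
  rw [ENNReal.ofReal_div_of_pos hl, ENNReal.ofReal_coe_nnreal, ENNReal.le_div_iff_mul_le
    (.inl (by exact_mod_cast hl.ne')) (.inl ENNReal.coe_ne_top), mul_comm]
  refine le_trans ?_ (mul_measure_exists_le_lt_le_of_rightContinuous hZ hZ_nonneg hZ_right b l)
  gcongr l * μ ?_
  rintro ω ⟨s, hs, hgs⟩
  exact ⟨s, hs.2, (hg s hs).trans_lt hgs⟩

end MaximalInequality

section GeometricShells

theorem exists_mem_Ioc_div_pow {K : Type*} [Field K] [LinearOrder K] [IsStrictOrderedRing K]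
    [Archimedean K] {r s t : K} (hr : 1 < r) (hs : s ∈ Ioc 0 t) :
    ∃ k : ℕ, s ∈ Ioc (t / r ^ (k + 1)) (t / r ^ k) := by
  obtain ⟨k, hk, hk'⟩ := exists_nat_pow_near ((one_le_div hs.1).2 hs.2) hr
  have hr_pow (j : ℕ) : 0 < r ^ j := pow_pos (one_pos.trans hr) j
  exact ⟨k, (div_lt_comm₀ (hr_pow _) hs.1).2 hk', (le_div_comm₀ (hr_pow k) hs.1).1 hk⟩

theorem hasSum_div_pow_succ_rpow {r t δ : ℝ} (hr : 1 < r) (ht : 0 ≤ t) (hδ : 0 < δ) :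
    HasSum (fun k : ℕ => (t / r ^ (k + 1)) ^ δ) (t ^ δ / (r ^ δ - 1)) := by
  have hr_pos : 0 < r := one_pos.trans hr
  have h_one_lt : 1 < r ^ δ := Real.one_lt_rpow hr hδ
  have h_term (k : ℕ) : (t / r ^ (k + 1)) ^ δ = t ^ δ / r ^ δ * (r ^ δ)⁻¹ ^ k := by
    rw [Real.div_rpow ht (by positivity), ← Real.rpow_pow_comm hr_pos.le, pow_succ', inv_pow]
    field_simp
  have h_sum : t ^ δ / (r ^ δ - 1) = t ^ δ / r ^ δ * (1 - (r ^ δ)⁻¹)⁻¹ := by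
    have := (sub_pos.2 h_one_lt).ne'
    field_simp
  simp only [h_term, h_sum]
  exact (hasSum_geometric_of_lt_one (by positivity) (inv_lt_one_of_one_lt₀ h_one_lt)).mul_left _

theorem mul_rpow_div_rpow_sub_one_le {r t δ C : ℝ} {N : ℕ} (hr : 1 < r) (hδ : 0 < δ) (hC : 0 ≤ C)
    (ht : t ∈ Ioc 0 (1 / r ^ N)) :
    C * (t ^ δ / (r ^ δ - 1)) ≤ C / (r ^ (((N : ℝ) + 1) * δ) * (1 - r ^ (-δ))) := by
  have hr_pos : 0 < r := one_pos.trans hr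
  have h_pos : 0 < r ^ δ - 1 := sub_pos.2 (Real.one_lt_rpow hr hδ)
  have ht_rpow : t ^ δ ≤ 1 / r ^ (N * δ) :=
    (Real.rpow_le_rpow ht.1.le ht.2 hδ.le).trans_eq <| by
      rw [Real.div_rpow zero_le_one (by positivity), Real.one_rpow, Real.rpow_natCast_mul hr_pos.le]
  calc C * (t ^ δ / (r ^ δ - 1))
    _ ≤ C * (1 / r ^ (N * δ) / (r ^ δ - 1)) := by gcongr
    _ = C / (r ^ (((N : ℝ) + 1) * δ) * (1 - r ^ (-δ))) := by
      rw [add_one_mul, Real.rpow_add hr_pos, Real.rpow_neg hr_pos.le]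
      field_simp

end GeometricShells

section PowerLevels

variable {Ω : Type*} {m : MeasurableSpace Ω} {μ : Measure Ω} [IsFiniteMeasure μ]
  {ℱ : Filtration ℝ m} {Z : ℝ → Ω → ℝ} {F : ℝ → ℝ} {δ C : ℝ}

theorem measure_exists_mem_Ioc_div_rpow_lt_le (hZ : Submartingale Z ℱ μ) (hZ_nonneg : 0 ≤ Z)
    (hZ_right : ∀ ω t, ContinuousWithinAt (fun s => Z s ω) (Ici t) t) {a b : ℝ} (ha : 0 < a)
    (hab : a ≤ b) (hFa : 0 < F a) (hC : F b / F a ≤ C)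
    (hmono : MonotoneOn (fun t => F t / t ^ δ) (Icc a b)) (hmean : ∫ ω, Z b ω ∂μ ≤ F b) :
    μ {ω | ∃ s ∈ Ioc a b, F s / s ^ δ < Z s ω} ≤ ENNReal.ofReal (C * a ^ δ) := by
  have ha_rpow : 0 < a ^ δ := Real.rpow_pos_of_pos ha δ
  refine (measure_exists_mem_Ioc_lt_le hZ hZ_nonneg hZ_right (div_pos hFa ha_rpow) fun s hs =>
    hmono (left_mem_Icc.2 hab) (Ioc_subset_Icc_self hs) hs.1.le).trans
    (ENNReal.ofReal_le_ofReal ?_)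
  calc (∫ ω, Z b ω ∂μ) / (F a / a ^ δ)
    _ ≤ F b / (F a / a ^ δ) := by gcongr
    _ = F b / F a * a ^ δ := by rw [div_div_eq_mul_div, mul_div_right_comm]
    _ ≤ C * a ^ δ := by gcongr

theorem stmt1_general {r T t : ℝ} (hr : 1 < r) (hδ : 0 < δ)
    (hFpos : ∀ t ∈ Ioc 0 T, 0 < F t)
    (hC : ∀ s t, 0 < s → s ≤ t → t ≤ r * s → t ≤ T → F t / F s ≤ C)
    (hmono : MonotoneOn (fun t => F t / t ^ δ) (Ioc 0 T))
    (hZ : Submartingale Z ℱ μ) (hZ_nonneg : 0 ≤ Z)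
    (hZ_right : ∀ ω t, ContinuousWithinAt (fun s => Z s ω) (Ici t) t)
    (hmean : ∀ t ∈ Ioc 0 T, ∫ ω, Z t ω ∂μ ≤ F t) (ht : t ∈ Ioc 0 T) :
    μ {ω | ∃ s ∈ Ioc 0 t, F s / s ^ δ < Z s ω} ≤
      ENNReal.ofReal (C * (t ^ δ / (r ^ δ - 1))) := by
  have hr_pos : 0 < r := one_pos.trans hr
  let b (k : ℕ) : ℝ := t / r ^ k
  have hb_succ (k : ℕ) : b k = r * b (k + 1) := by simp only [b, pow_succ]; field_simp
  have hb_pos (k : ℕ) : 0 < b k := div_pos ht.1 (pow_pos hr_pos k)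
  have hb_le (k : ℕ) : b (k + 1) ≤ b k := hb_succ k ▸ le_mul_of_one_le_left (hb_pos _).le hr.le
  have hb_mem (k : ℕ) : b k ∈ Ioc 0 T :=
    ⟨hb_pos k, (div_le_self ht.1.le (one_le_pow₀ hr.le)).trans ht.2⟩
  have hC_nonneg : 0 ≤ C := (div_pos (hFpos t ht) (hFpos t ht)).le.trans
    (hC t t ht.1 le_rfl (le_mul_of_one_le_left ht.1.le hr.le) ht.2)
  have h_shells : {ω | ∃ s ∈ Ioc 0 t, F s / s ^ δ < Z s ω} ⊆
      ⋃ k, {ω | ∃ s ∈ Ioc (b (k + 1)) (b k), F s / s ^ δ < Z s ω} := by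
    rintro ω ⟨s, hs, hsZ⟩
    obtain ⟨k, hk⟩ := exists_mem_Ioc_div_pow hr hs
    exact mem_iUnion.2 ⟨k, s, hk, hsZ⟩
  have h_sum := (hasSum_div_pow_succ_rpow hr ht.1.le hδ).mul_left C
  calc μ {ω | ∃ s ∈ Ioc 0 t, F s / s ^ δ < Z s ω}
    _ ≤ ∑' k, μ {ω | ∃ s ∈ Ioc (b (k + 1)) (b k), F s / s ^ δ < Z s ω} :=
      (measure_mono h_shells).trans (measure_iUnion_le _)
    _ ≤ ∑' k, ENNReal.ofReal (C * b (k + 1) ^ δ) := ENNReal.tsum_le_tsum fun k =>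
      measure_exists_mem_Ioc_div_rpow_lt_le hZ hZ_nonneg hZ_right (hb_pos _) (hb_le k)
        (hFpos _ (hb_mem _)) (hC _ _ (hb_pos _) (hb_le k) (hb_succ k).le (hb_mem k).2)
        (hmono.mono fun s hs => ⟨(hb_pos _).trans_le hs.1, hs.2.trans (hb_mem k).2⟩)
        (hmean _ (hb_mem k))
    _ = ENNReal.ofReal (C * (t ^ δ / (r ^ δ - 1))) := by
      rw [← ENNReal.ofReal_tsum_of_nonneg (fun k => by have := hb_pos (k + 1); positivity)
        h_sum.summable, h_sum.tsum_eq]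

end PowerLevels

theorem stmt1 {Ω : Type*} [m : MeasurableSpace Ω] (μ : Measure Ω) [IsProbabilityMeasure μ]
    (ℱ : Filtration ℝ m) (Z : ℝ → Ω → ℝ) (F : ℝ → ℝ) (δ C : ℝ) (hδ : 0 < δ)
    (hFnn : ∀ t ∈ Set.Icc (0:ℝ) 1, 0 ≤ F t)
    (hFpos : ∀ t ∈ Set.Ioc (0:ℝ) 1, 0 < F t)
    (hC : ∀ s t : ℝ, 0 < s → s ≤ t → t ≤ 2 * s → t ≤ 1 → F t / F s ≤ C)
    (hmono : MonotoneOn (fun t => F t / t ^ δ) (Set.Ioc (0:ℝ) 1))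
    (hsub : Submartingale Z ℱ μ)
    (hZnn : ∀ t ω, 0 ≤ Z t ω)
    (hcadlag : ∀ ω, ∀ t : ℝ,
      ContinuousWithinAt (fun s => Z s ω) (Set.Ici t) t ∧
      ∃ l : ℝ, Filter.Tendsto (fun s => Z s ω) (nhdsWithin t (Set.Iio t)) (nhds l))
    (hmean : ∀ t ∈ Set.Icc (0:ℝ) 1, ∫ ω, Z t ω ∂μ ≤ F t) :
    ∀ N : ℕ, ∀ t ∈ Set.Icc ((1:ℝ) / 2 ^ (N + 1)) ((1:ℝ) / 2 ^ N),
      μ {ω | ∃ s ∈ Set.Ioc (0:ℝ) t, F s / s ^ δ < Z s ω} ≤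
        ENNReal.ofReal (C / ((2:ℝ) ^ (((N:ℝ) + 1) * δ) * (1 - (2:ℝ) ^ (-δ)))) := by
  intro N t ht
  have ht_mem : t ∈ Ioc 0 (1 / 2 ^ N) := ⟨lt_of_lt_of_le (by positivity) ht.1, ht.2⟩
  have h_le_one : (1 : ℝ) / 2 ^ N ≤ 1 :=
    div_le_one_of_le₀ (one_le_pow₀ one_le_two) (by positivity)
  have hC_nonneg : 0 ≤ C := (div_nonneg (hFnn 1 (by simp)) (hFnn 1 (by simp))).trans
    (hC 1 1 one_pos le_rfl (by simp) le_rfl)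
  exact (stmt1_general one_lt_two hδ hFpos hC hmono hsub hZnn (fun ω t => (hcadlag ω t).1)
    (fun s hs => hmean s (Ioc_subset_Icc_self hs)) (Ioc_subset_Ioc_right h_le_one ht_mem)).trans
    (ENNReal.ofReal_le_ofReal (mul_rpow_div_rpow_sub_one_le one_lt_two hδ hC_nonneg ht_mem))
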